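/- arXiv:1801.06214 — 3 statements merged into one kernel-verified Lean document; each statement's English description precedes it below -/
import Mathlib

section
/- Let ℓ be a prime and let α ∈ ℚ be a rational number, regarded as an element of ℚ_ℓ. Then the Ruban continued fraction expansion of α terminates if and only if every complete quotient α_n of the expansion (which is a rational number) is non-negative. -/
open Filter Topology
open scoped Classical

/-- `a` is the `ℓ`-adic integral part of the rational number `α`. -/
def IsRubanFloorQ (p : ℕ) (α a : ℚ) : Prop :=
  (∃ (m : ℤ) (k : ℕ), a = (m : ℚ) / (p : ℚ) ^ k) ∧ 0 ≤ a ∧ a < (p : ℚ) ∧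
    padicNorm p (α - a) < 1

noncomputable def rubanFloorQ (p : ℕ) (α : ℚ) : ℚ :=
  if h : ∃ a : ℚ, IsRubanFloorQ p α a then h.choose else 0

/-- Complete quotients of the Ruban continued fraction expansion of a rational number. -/
noncomputable def rubanCQQ (p : ℕ) (α : ℚ) : ℕ → ℚ
  | 0 => α
  | n + 1 => (rubanCQQ p α n - rubanFloorQ p (rubanCQQ p α n))⁻¹

/-- Partial quotients of the Ruban continued fraction expansion of a rational number. -/
noncomputable def rubanPQQ (p : ℕ) (α : ℚ) (n : ℕ) : ℚ :=
  rubanFloorQ p (rubanCQQ p α n)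

/-- The Ruban continued fraction expansion of `α` terminates. -/
def RubanTerminatesQ (p : ℕ) (α : ℚ) : Prop :=
  ∃ n, rubanCQQ p α n = rubanPQQ p α n

/-!
The remainder `r = α_n - a_n` at a step of the expansion satisfies `|r|_p < 1`, that is, `p` divides
its numerator, so `p` divides the denominator of the next complete quotient `γ = r⁻¹`. The
denominator of `γ - ⌊γ⌋_p` is prime to `p` and divides that of `γ`, hence it is at most `γ.den / p`;
if `γ - ⌊γ⌋_p ≥ 0`, the numerator shrinks by the factor `p` as well. So, as long as the complete
quotients stay non-negative, their heights decrease strictly and the expansion has to stop.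

Conversely, partial quotients are non-negative, so a negative complete quotient is followed by
negative ones only, whereas after termination all complete quotients are `0⁻¹ = 0`.
-/

section NumeratorDivisibility

variable {p : ℕ} {q x y : ℚ}

theorem den_coprime_of_dvd_num (h : (p : ℤ) ∣ q.num) : q.den.Coprime p :=
  (q.reduced.coprime_dvd_left (Int.natCast_dvd.mp h)).symm

theorem dvd_num_of_mul_eq_mul {d : ℕ} {z : ℤ} (hd : d.Coprime p) (h : q * d = p * z) :
    (p : ℤ) ∣ q.num := by
  have hnum : q.num * d = p * (z * q.den) := by
    have : (q.num : ℚ) * d = p * (z * q.den) := by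
      rw [← Rat.mul_den_eq_num]
      linear_combination (q.den : ℚ) * h
    exact_mod_cast this
  exact (Nat.isCoprime_iff_coprime.mpr hd.symm).dvd_of_dvd_mul_right ⟨_, hnum⟩

theorem dvd_num_sub_of_dvd_num (hx : (p : ℤ) ∣ x.num) (hy : (p : ℤ) ∣ y.num) :
    (p : ℤ) ∣ (x - y).num := by
  have hden : (x.den * y.den).Coprime p :=
    (den_coprime_of_dvd_num hx).mul_left (den_coprime_of_dvd_num hy)
  obtain ⟨u, hu⟩ := hx
  obtain ⟨v, hv⟩ := hy
  have hxu : x * x.den = p * u := by rw [Rat.mul_den_eq_num, hu]; push_cast; rfl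
  have hyv : y * y.den = p * v := by rw [Rat.mul_den_eq_num, hv]; push_cast; rfl
  refine dvd_num_of_mul_eq_mul (z := u * y.den - v * x.den) hden ?_
  push_cast
  linear_combination (y.den : ℚ) * hxu - (x.den : ℚ) * hyv

-- For composite `p` the function `padicNorm p` is not multiplicative, but its open unit ball is
-- still the ideal generated by `p` in the ring of fractions with denominator prime to `p`.
theorem padicNorm_lt_one_iff_dvd_num (hp : 1 < p) : padicNorm p q < 1 ↔ (p : ℤ) ∣ q.num := by
  rcases eq_or_ne q 0 with rfl | hq
  · simp
  rw [padicNorm.eq_zpow_of_nonzero hq, zpow_lt_one_iff_right₀ (by exact_mod_cast hp), neg_lt_zero,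
    padicValRat_def]
  constructor
  · intro hpos
    by_contra hndvd
    rw [padicValInt.eq_zero_of_not_dvd hndvd] at hpos
    omega
  · intro hdvd
    have hval_num : padicValInt p q.num ≠ 0 := by
      simp [padicValInt.eq_zero_iff, hp.ne', hq, hdvd]
    have hval_den : padicValNat p q.den = 0 := padicValNat.eq_zero_of_not_dvd fun hden =>
      hp.ne' (Nat.eq_one_of_dvd_coprimes (den_coprime_of_dvd_num hdvd) hden dvd_rfl)
    omega

end NumeratorDivisibility

theorem exists_coprime_dvd_pow_mul (p : ℕ) {n : ℕ} (hn : n ≠ 0) :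
    ∃ d k : ℕ, d.Coprime p ∧ n ∣ p ^ k * d := by
  induction n using Nat.strong_induction_on with
  | _ n ih =>
    by_cases hcop : n.Coprime p
    · exact ⟨n, 0, hcop, Dvd.intro_left _ rfl⟩
    obtain ⟨m, hm⟩ := Nat.gcd_dvd_left n p
    have hm0 : m ≠ 0 := by
      rintro rfl
      exact hn hm
    have hgcd : 1 < n.gcd p := by
      have := Nat.gcd_pos_of_pos_left p (Nat.pos_of_ne_zero hn)
      unfold Nat.Coprime at hcop
      omega
    have hlt : m < n :=
      (lt_mul_of_one_lt_left (Nat.pos_of_ne_zero hm0) hgcd).trans_eq hm.symm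
    obtain ⟨d, k, hd, hdvd⟩ := ih m hlt hm0
    refine ⟨d, k + 1, hd, ?_⟩
    rw [hm, pow_succ', mul_assoc]
    exact mul_dvd_mul (Nat.gcd_dvd_right n p) hdvd

section Floor

variable {p : ℕ} {α a b : ℚ}

theorem den_dvd_pow_of_eq_div_pow {m : ℤ} {k : ℕ} (h : a = (m : ℚ) / (p : ℚ) ^ k) :
    a.den ∣ p ^ k := by
  have := Rat.den_dvd m ((p : ℤ) ^ k)
  rw [Rat.divInt_eq_div] at this
  rw [h]
  exact_mod_cast this

namespace IsRubanFloorQ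

theorem dvd_num_sub (hp : 1 < p) (ha : IsRubanFloorQ p α a) : (p : ℤ) ∣ (α - a).num :=
  (padicNorm_lt_one_iff_dvd_num hp).mp ha.2.2.2

theorem den_sub_dvd_den (hp : 1 < p) (ha : IsRubanFloorQ p α a) : (α - a).den ∣ α.den := by
  obtain ⟨m, k, hmk⟩ := ha.1
  have hcop : (α - a).den.Coprime (p ^ k) :=
    (den_coprime_of_dvd_num (ha.dvd_num_sub hp)).pow_right k
  refine hcop.dvd_of_dvd_mul_right ((Rat.sub_den_dvd α a).trans ?_)
  exact mul_dvd_mul_left _ (den_dvd_pow_of_eq_div_pow hmk)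

theorem mul_den_sub_le_den (hp : 1 < p) (ha : IsRubanFloorQ p α a) (hα : p ∣ α.den) :
    p * (α - a).den ≤ α.den :=
  have hcop : p.Coprime (α - a).den := (den_coprime_of_dvd_num (ha.dvd_num_sub hp)).symm
  Nat.le_of_dvd α.den_pos (hcop.mul_dvd_of_dvd_of_dvd hα (ha.den_sub_dvd_den hp))

theorem unique (hp : 1 < p) (ha : IsRubanFloorQ p α a) (hb : IsRubanFloorQ p α b) : a = b := by
  have hdvd : (p : ℤ) ∣ (a - b).num := by
    simpa only [sub_sub_sub_cancel_left] using
      dvd_num_sub_of_dvd_num (hb.dvd_num_sub hp) (ha.dvd_num_sub hp)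
  obtain ⟨⟨m, j, hmj⟩, ha_nonneg, ha_lt, -⟩ := ha
  obtain ⟨⟨n, k, hnk⟩, hb_nonneg, hb_lt, -⟩ := hb
  have hden_dvd : (a - b).den ∣ p ^ j * p ^ k := (Rat.sub_den_dvd a b).trans
    (mul_dvd_mul (den_dvd_pow_of_eq_div_pow hmj) (den_dvd_pow_of_eq_div_pow hnk))
  have hcop : (a - b).den.Coprime (p ^ j * p ^ k) :=
    ((den_coprime_of_dvd_num hdvd).pow_right j).mul_right
      ((den_coprime_of_dvd_num hdvd).pow_right k)
  have hint : ((a - b).num : ℚ) = a - b :=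
    (Rat.den_eq_one_iff _).mp (Nat.Coprime.eq_one_of_dvd hcop hden_dvd)
  have habs : |(a - b).num| < (p : ℤ) := by
    have : |((a - b).num : ℚ)| < p := by
      rw [hint, abs_sub_lt_iff]
      constructor <;> linarith
    exact_mod_cast this
  exact sub_eq_zero.mp (Rat.num_eq_zero.mp (Int.eq_zero_of_abs_lt_dvd hdvd habs))

end IsRubanFloorQ

theorem exists_isRubanFloorQ (hp : 1 < p) (α : ℚ) : ∃ a, IsRubanFloorQ p α a := by
  obtain ⟨d, k, hd, e, he⟩ := exists_coprime_dvd_pow_mul p α.den_ne_zero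
  have hpk : (0 : ℚ) < (p : ℚ) ^ k := by positivity
  have hα : α * (p ^ k * d) = α.num * e := by
    have : (p : ℚ) ^ k * d = α.den * e := by exact_mod_cast he
    rw [this, ← mul_assoc, Rat.mul_den_eq_num]
  -- `α = X / (p ^ k * d)` with `X = α.num * e`, and `m := X * d⁻¹` modulo `p ^ (k + 1)`
  obtain ⟨u, v, huv⟩ : IsCoprime (d : ℤ) ((p : ℤ) ^ (k + 1)) :=
    (Nat.isCoprime_iff_coprime.mpr hd).pow_right
  obtain ⟨m, hm_nonneg, hm_lt, hm⟩ :=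
    Int.existsUnique_equiv (α.num * e * u) (b := (p : ℤ) ^ (k + 1)) (by positivity)
  obtain ⟨w, hw⟩ := hm.dvd
  have hmul : (α - m / (p : ℚ) ^ k) * d = p * ((w * d + α.num * e * v : ℤ) : ℚ) := by
    have huv' : (u : ℚ) * d + v * p ^ (k + 1) = 1 := by exact_mod_cast huv
    have hw' : (α.num : ℚ) * e * u - m = p ^ (k + 1) * w := by exact_mod_cast hw
    apply mul_right_cancel₀ hpk.ne'
    field_simp
    push_cast
    linear_combination hα - (α.num : ℚ) * e * huv' + (d : ℚ) * hw'
  refine ⟨m / (p : ℚ) ^ k, ⟨m, k, rfl⟩, by positivity, ?_, ?_⟩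
  · rw [div_lt_iff₀ hpk, ← pow_succ']
    exact_mod_cast hm_lt
  · exact (padicNorm_lt_one_iff_dvd_num hp).mpr (dvd_num_of_mul_eq_mul hd hmul)

theorem isRubanFloorQ_rubanFloorQ (hp : 1 < p) (α : ℚ) : IsRubanFloorQ p α (rubanFloorQ p α) := by
  have hex := exists_isRubanFloorQ hp α
  rw [rubanFloorQ, dif_pos hex]
  exact hex.choose_spec

theorem rubanFloorQ_zero (hp : 1 < p) : rubanFloorQ p 0 = 0 := by
  have hzero : IsRubanFloorQ p 0 0 := ⟨⟨0, 0, by simp⟩, le_rfl, by positivity, by simp⟩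
  exact (isRubanFloorQ_rubanFloorQ hp 0).unique hp hzero

theorem rubanFloorQ_nonneg (p : ℕ) (α : ℚ) : 0 ≤ rubanFloorQ p α := by
  unfold rubanFloorQ
  split_ifs with hex
  · exact hex.choose_spec.2.1
  · exact le_rfl

end Floor

section Height

/-- The naive height `max |m| n` of a rational number `m / n` in lowest terms, the quantity that
drives the descent along the complete quotients. -/
def naiveHeight (q : ℚ) : ℕ := max q.num.natAbs q.den

theorem naiveHeight_pos (q : ℚ) : 0 < naiveHeight q :=
  lt_max_of_lt_right q.den_pos

theorem naiveHeight_inv {q : ℚ} (hq : q ≠ 0) : naiveHeight q⁻¹ = naiveHeight q := by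
  have hnum : (q⁻¹).num.natAbs = q.den := by
    simp [Rat.num_inv, Int.natAbs_mul, Int.natAbs_sign_of_ne_zero (Rat.num_ne_zero.mpr hq)]
  rw [naiveHeight, hnum, Rat.den_inv_of_ne_zero hq, max_comm, naiveHeight]

theorem mul_num_le_num_of_mul_den_le_den {c : ℕ} {x y : ℚ} (hx : 0 ≤ x) (hxy : x ≤ y)
    (hden : c * x.den ≤ y.den) : c * x.num ≤ y.num := by
  have hden' : (c : ℚ) * x.den ≤ y.den := by exact_mod_cast hden
  have : (c : ℚ) * x.num ≤ y.num :=
    calc (c : ℚ) * x.num = x * (c * x.den) := by rw [← Rat.mul_den_eq_num x]; ring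
      _ ≤ y * y.den := by gcongr; exact hx.trans hxy
      _ = y.num := Rat.mul_den_eq_num y
  exact_mod_cast this

theorem IsRubanFloorQ.mul_naiveHeight_sub_le {p : ℕ} {γ a : ℚ} (hp : 1 < p)
    (ha : IsRubanFloorQ p γ a) (hγ : p ∣ γ.den) (haγ : a ≤ γ) :
    p * naiveHeight (γ - a) ≤ naiveHeight γ := by
  have hden := ha.mul_den_sub_le_den hp hγ
  have hnum := mul_num_le_num_of_mul_den_le_den (sub_nonneg.mpr haγ)
    (sub_le_self γ ha.2.1) hden
  have hsub_num : 0 ≤ (γ - a).num := Rat.num_nonneg.mpr (sub_nonneg.mpr haγ)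
  rw [naiveHeight, naiveHeight, ← Nat.mul_max_mul_left]
  refine max_le_max ?_ hden
  zify
  rwa [abs_of_nonneg hsub_num, abs_of_nonneg (le_trans (by positivity) hnum)]

end Height

section CompleteQuotients

variable {p : ℕ} {α : ℚ} {m n : ℕ}

theorem rubanCQQ_succ (p : ℕ) (α : ℚ) (n : ℕ) :
    rubanCQQ p α (n + 1) = (rubanCQQ p α n - rubanPQQ p α n)⁻¹ := rfl

theorem isRubanFloorQ_rubanPQQ (hp : 1 < p) (α : ℚ) (n : ℕ) :
    IsRubanFloorQ p (rubanCQQ p α n) (rubanPQQ p α n) :=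
  isRubanFloorQ_rubanFloorQ hp _

theorem rubanCQQ_eq_zero_of_lt (hp : 1 < p) (hn : rubanCQQ p α n = rubanPQQ p α n) (hnm : n < m) :
    rubanCQQ p α m = 0 := by
  induction m, hnm using Nat.le_induction with
  | base => rw [rubanCQQ_succ, hn, sub_self, inv_zero]
  | succ m _ ih => rw [rubanCQQ_succ, rubanPQQ, ih, rubanFloorQ_zero hp, sub_self, inv_zero]

theorem rubanPQQ_le_rubanCQQ (h : 0 ≤ rubanCQQ p α (n + 1)) :
    rubanPQQ p α n ≤ rubanCQQ p α n :=
  sub_nonneg.mp (inv_nonneg.mp h)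

theorem rubanCQQ_nonneg_of_le (hmn : m ≤ n) (hn : 0 ≤ rubanCQQ p α n) : 0 ≤ rubanCQQ p α m := by
  induction n, hmn using Nat.le_induction with
  | base => exact hn
  | succ n _ ih => exact ih ((rubanFloorQ_nonneg p _).trans (rubanPQQ_le_rubanCQQ hn))

theorem dvd_den_rubanCQQ_succ (hp : 1 < p) (hn : rubanCQQ p α n ≠ rubanPQQ p α n) :
    p ∣ (rubanCQQ p α (n + 1)).den := by
  rw [rubanCQQ_succ, Rat.den_inv_of_ne_zero (sub_ne_zero.mpr hn)]
  exact Int.natCast_dvd.mp ((isRubanFloorQ_rubanPQQ hp α n).dvd_num_sub hp)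

theorem naiveHeight_rubanCQQ_succ_lt (hp : 1 < p) (hn : rubanCQQ p α n ≠ rubanPQQ p α n)
    (hden : p ∣ (rubanCQQ p α n).den) (hnonneg : 0 ≤ rubanCQQ p α (n + 1)) :
    naiveHeight (rubanCQQ p α (n + 1)) < naiveHeight (rubanCQQ p α n) := by
  rw [rubanCQQ_succ, naiveHeight_inv (sub_ne_zero.mpr hn)]
  calc naiveHeight (rubanCQQ p α n - rubanPQQ p α n)
      < p * naiveHeight (rubanCQQ p α n - rubanPQQ p α n) :=
        lt_mul_of_one_lt_left (naiveHeight_pos _) hp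
    _ ≤ naiveHeight (rubanCQQ p α n) :=
        (isRubanFloorQ_rubanPQQ hp α n).mul_naiveHeight_sub_le hp hden
          (rubanPQQ_le_rubanCQQ hnonneg)

theorem RubanTerminatesQ.rubanCQQ_nonneg (hp : 1 < p) (h : RubanTerminatesQ p α) (n : ℕ) :
    0 ≤ rubanCQQ p α n := by
  obtain ⟨N, hN⟩ := h
  have hzero : rubanCQQ p α (max n (N + 1)) = 0 :=
    rubanCQQ_eq_zero_of_lt hp hN (lt_max_of_lt_right N.lt_succ_self)
  exact rubanCQQ_nonneg_of_le (le_max_left n (N + 1)) hzero.ge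

theorem rubanTerminatesQ_of_rubanCQQ_nonneg (hp : 1 < p) (h : ∀ n, 0 ≤ rubanCQQ p α n) :
    RubanTerminatesQ p α := by
  by_contra hinf
  have hne : ∀ n, rubanCQQ p α n ≠ rubanPQQ p α n := not_exists.mp hinf
  have hanti : StrictAnti fun n => naiveHeight (rubanCQQ p α (n + 1)) :=
    strictAnti_nat_of_succ_lt fun n => naiveHeight_rubanCQQ_succ_lt hp (hne (n + 1))
      (dvd_den_rubanCQQ_succ hp (hne n)) (h (n + 2))
  exact not_strictAnti_of_wellFoundedLT _ hanti

end CompleteQuotients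

theorem ruban_terminates_iff_all_complete_quotients_nonneg_general
    (ℓ : ℕ) (hℓ : 1 < ℓ) (α : ℚ) :
    RubanTerminatesQ ℓ α ↔ ∀ n : ℕ, 0 ≤ rubanCQQ ℓ α n :=
  ⟨RubanTerminatesQ.rubanCQQ_nonneg hℓ, rubanTerminatesQ_of_rubanCQQ_nonneg hℓ⟩

/-- For a prime `ℓ` and a rational `α`, the Ruban continued fraction
expansion of `α` terminates if and only if all complete quotients are non-negative. -/
theorem ruban_terminates_iff_all_complete_quotients_nonneg
    (ℓ : ℕ) (hℓ : ℓ.Prime) (α : ℚ) :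
    RubanTerminatesQ ℓ α ↔ ∀ n : ℕ, 0 ≤ rubanCQQ ℓ α n := by
  exact ruban_terminates_iff_all_complete_quotients_nonneg_general ℓ hℓ.one_lt α
end

section
/- Let ℓ be a prime and let α ∈ ℚ be a rational number regarded as an element of ℚ_ℓ. If the Ruban continued fraction expansion of α does not terminate, then it is periodic with all partial quotients eventually equal to ℓ − ℓ^{-1}; that is, there exists N ≥ 0 such that a_n = ℓ − 1/ℓ for all n ≥ N. -/
open Filter Topology
open scoped Classical

/-!
Write a rational number as `x / (p ^ k * y)` with `p ∤ y`. One step of the expansion turns it into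
`y / (p ^ (j + 1) * z)`, where `p ^ (k + 1) * p ^ j * z = x - c * y` and `0 ≤ c < p ^ (k + 1)`.
Hence `p ^ (k + 1) * |z| ≤ |x| + c * |y|`, so `|z| < max |x| |y|` unless `y = -z` and `j = 0`, that
is, unless the new complete quotient is `-1 / p`. Two steps without reaching `-1 / p` therefore
decrease `max |x| |y|`, so a nonterminating expansion reaches `-1 / p`, a fixed point of the step.
-/

theorem exists_mul_eq_sub_mul_of_isCoprime {m y : ℤ} (hm : 0 < m) (h : IsCoprime m y) (x : ℤ) :
    ∃ c t : ℤ, 0 ≤ c ∧ c < m ∧ m * t = x - c * y := by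
  obtain ⟨u, v, huv⟩ := h
  refine ⟨x * v % m, x * u + x * v / m * y, Int.emod_nonneg _ hm.ne', Int.emod_lt_of_pos _ hm, ?_⟩
  linear_combination x * huv + y * Int.mul_ediv_add_emod (x * v) m

theorem eq_neg_and_eq_one_of_mul_mul_eq_sub_mul {m q x y z c : ℤ} (hm : 2 ≤ m) (hq : 1 ≤ q)
    (hc₀ : 0 ≤ c) (hcm : c < m) (h : m * (q * z) = x - c * y) (hz : z ≠ 0)
    (hx : |x| ≤ |z|) (hy : |y| ≤ |z|) : y = -z ∧ q = 1 := by
  have hz₀ : 0 < |z| := abs_pos.2 hz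
  have hbound : m * (q * |z|) ≤ |x| + c * |y| := by
    calc m * (q * |z|) = |x - c * y| := by
          rw [← h, abs_mul, abs_mul, abs_of_pos (by lia : 0 < m), abs_of_pos (by lia : 0 < q)]
      _ ≤ |x| + |c * y| := abs_sub _ _
      _ = |x| + c * |y| := by rw [abs_mul, abs_of_nonneg hc₀]
  have hq_one : q = 1 := by
    have hle : m * |z| * q ≤ m * |z| * 1 := by nlinarith
    exact le_antisymm (le_of_mul_le_mul_left hle (by positivity)) hq
  subst hq_one
  have hyz : |y| = |z| := by
    have hle : (m - 1) * |z| ≤ (m - 1) * |y| := by nlinarith [abs_nonneg y]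
    exact le_antisymm hy (le_of_mul_le_mul_left hle (by lia))
  refine ⟨(abs_eq_abs.1 hyz).resolve_left fun hyz_eq => ?_, rfl⟩
  have hxz : |x| = (m + c) * |z| := by
    rw [← abs_of_pos (by lia : 0 < m + c), ← abs_mul]
    congr 1
    rw [hyz_eq] at h
    linear_combination -h
  nlinarith

/-- `α = x / (p ^ k * y)` with `p ∤ y`: the form of the complete quotients on which the descent runs,
with `max |x| |y|` as height. Common factors, including powers of `p` in `x`, are allowed, so that
`y` can be reused unreduced as the next numerator. -/
structure IsRubanFraction (p : ℕ) (α : ℚ) (x y : ℤ) (k : ℕ) : Prop where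
  not_dvd : ¬ (p : ℤ) ∣ y
  eq_div : α = x / ((p : ℚ) ^ k * y)

theorem IsRubanFraction.ne_zero {p : ℕ} {α : ℚ} {x y : ℤ} {k : ℕ}
    (h : IsRubanFraction p α x y k) : y ≠ 0 := by
  rintro rfl
  exact h.not_dvd (dvd_zero _)

section RubanExpansion

variable {p : ℕ} [hp : Fact p.Prime]

theorem padicNorm_prime_mul_div_lt_one {y : ℤ} (hy : ¬ (p : ℤ) ∣ y) (t : ℤ) :
    padicNorm p (p * t / y) < 1 := by
  rw [padicNorm.div, (padicNorm.int_eq_one_iff y).2 hy, div_one]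
  exact_mod_cast (padicNorm.int_lt_one_iff (p * t)).2 (dvd_mul_right _ _)

theorem exists_eq_prime_mul_of_padicNorm_div_pow_lt_one {w : ℤ} {n : ℕ}
    (h : padicNorm p (w / (p : ℚ) ^ n) < 1) : ∃ t : ℤ, (w : ℚ) / (p : ℚ) ^ n = p * t := by
  have hp₀ : (p : ℚ) ≠ 0 := mod_cast hp.out.ne_zero
  induction n generalizing w with
  | zero =>
    obtain ⟨t, rfl⟩ := (padicNorm.int_lt_one_iff w).1 (by simpa using h)
    exact ⟨t, by simp⟩
  | succ n ih =>
    have hpow : padicNorm p ((p : ℚ) ^ (n + 1)) ≤ 1 := mod_cast padicNorm.of_nat (p ^ (n + 1))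
    have hw : padicNorm p w < 1 := by
      rw [← div_mul_cancel₀ (w : ℚ) (pow_ne_zero (n + 1) hp₀), padicNorm.mul]
      exact mul_lt_one_of_nonneg_of_lt_one_left (padicNorm.nonneg _) h hpow
    obtain ⟨v, rfl⟩ := (padicNorm.int_lt_one_iff w).1 hw
    have hcancel : ((p * v : ℤ) : ℚ) / (p : ℚ) ^ (n + 1) = v / (p : ℚ) ^ n := by
      rw [Int.cast_mul, Int.cast_natCast, pow_succ', mul_div_mul_left _ _ hp₀]
    rw [hcancel] at h ⊢
    exact ih h

theorem IsRubanFloorQ.unique_s2 {α a b : ℚ} (ha : IsRubanFloorQ p α a) (hb : IsRubanFloorQ p α b) :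
    a = b := by
  obtain ⟨⟨m, k, rfl⟩, ha₀, hap, hαa⟩ := ha
  obtain ⟨⟨n, j, rfl⟩, hb₀, hbp, hαb⟩ := hb
  have hp₀ : (0 : ℚ) < p := mod_cast hp.out.pos
  have hdiff : (m : ℚ) / (p : ℚ) ^ k - n / (p : ℚ) ^ j =
      ((m * (p : ℤ) ^ j - n * (p : ℤ) ^ k : ℤ) : ℚ) / (p : ℚ) ^ (k + j) := by
    rw [div_sub_div _ _ (by positivity) (by positivity), pow_add]
    push_cast
    ring
  have hnorm : padicNorm p ((m : ℚ) / (p : ℚ) ^ k - n / (p : ℚ) ^ j) < 1 := by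
    rw [← sub_sub_sub_cancel_left _ _ α]
    exact padicNorm.sub.trans_lt (max_lt hαb hαa)
  obtain ⟨t, ht⟩ := exists_eq_prime_mul_of_padicNorm_div_pow_lt_one (hdiff ▸ hnorm)
  rw [← hdiff] at ht
  have ht_lt : (t : ℚ) < 1 := lt_of_mul_lt_mul_left (by linarith) hp₀.le
  have lt_ht : (-1 : ℚ) < t := lt_of_mul_lt_mul_left (by linarith) hp₀.le
  have ht₀ : t = 0 := by
    norm_cast at ht_lt lt_ht
    lia
  simpa [ht₀, sub_eq_zero] using ht

theorem IsRubanFloorQ.rubanFloorQ_eq {α a : ℚ} (ha : IsRubanFloorQ p α a) :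
    rubanFloorQ p α = a := by
  have hex : ∃ b, IsRubanFloorQ p α b := ⟨a, ha⟩
  rw [rubanFloorQ, dif_pos hex]
  exact hex.choose_spec.unique_s2 ha

theorem exists_isRubanFraction (α : ℚ) : ∃ x y k, IsRubanFraction p α x y k := by
  obtain ⟨k, y, hy, hden⟩ := WfDvdMonoid.max_power_factor (Int.natCast_ne_zero.2 α.den_nz)
    (Nat.prime_iff_prime_int.1 hp.out).irreducible
  refine ⟨α.num, y, k, hy, ?_⟩
  have hden' : (α.den : ℚ) = (p : ℚ) ^ k * y := mod_cast hden
  rw [← hden', Rat.num_div_den]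

namespace IsRubanFraction

variable {α : ℚ} {x y : ℤ} {k : ℕ}

theorem sub_div_pow (h : IsRubanFraction p α x y k) {c t : ℤ}
    (hct : (p : ℤ) ^ (k + 1) * t = x - c * y) : α - c / (p : ℚ) ^ k = p * t / y := by
  have hp₀ : (p : ℚ) ≠ 0 := mod_cast hp.out.ne_zero
  have hy₀ : (y : ℚ) ≠ 0 := mod_cast h.ne_zero
  have hct' : (p : ℚ) ^ (k + 1) * t = x - c * y := mod_cast hct
  rw [h.eq_div]
  field_simp
  linear_combination -hct'

theorem isRubanFloorQ (h : IsRubanFraction p α x y k) {c t : ℤ} (hc₀ : 0 ≤ c)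
    (hcp : c < (p : ℤ) ^ (k + 1)) (hct : (p : ℤ) ^ (k + 1) * t = x - c * y) :
    IsRubanFloorQ p α (c / (p : ℚ) ^ k) := by
  have hp₀ : (0 : ℚ) < p := mod_cast hp.out.pos
  refine ⟨⟨c, k, rfl⟩, by positivity, ?_, ?_⟩
  · rw [div_lt_iff₀ (by positivity), ← pow_succ']
    exact_mod_cast hcp
  · rw [h.sub_div_pow hct]
    exact padicNorm_prime_mul_div_lt_one h.not_dvd t

theorem exists_sub_rubanFloorQ_eq (h : IsRubanFraction p α x y k) :
    ∃ c t : ℤ, 0 ≤ c ∧ c < (p : ℤ) ^ (k + 1) ∧ (p : ℤ) ^ (k + 1) * t = x - c * y ∧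
      α - rubanFloorQ p α = p * t / y := by
  have hcop : IsCoprime ((p : ℤ) ^ (k + 1)) y :=
    ((Nat.prime_iff_prime_int.1 hp.out).coprime_iff_not_dvd.2 h.not_dvd).pow_left
  obtain ⟨c, t, hc₀, hcp, hct⟩ := exists_mul_eq_sub_mul_of_isCoprime
    (pow_pos (Int.natCast_pos.2 hp.out.pos) (k + 1)) hcop x
  refine ⟨c, t, hc₀, hcp, hct, ?_⟩
  rw [(h.isRubanFloorQ hc₀ hcp hct).rubanFloorQ_eq, h.sub_div_pow hct]

theorem exists_inv_sub_rubanFloorQ (h : IsRubanFraction p α x y k) (hα : α ≠ rubanFloorQ p α)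
    (hne : (α - rubanFloorQ p α)⁻¹ ≠ -1 / p) :
    ∃ z j, IsRubanFraction p (α - rubanFloorQ p α)⁻¹ y z j ∧ |z| < max |x| |y| := by
  have hp₂ : (2 : ℤ) ≤ p := mod_cast hp.out.two_le
  obtain ⟨c, t, hc₀, hcp, hct, hsub⟩ := h.exists_sub_rubanFloorQ_eq
  have ht₀ : t ≠ 0 := by
    rintro rfl
    exact hα (sub_eq_zero.1 (by simpa using hsub))
  obtain ⟨j, z, hz, rfl⟩ := WfDvdMonoid.max_power_factor ht₀
    (Nat.prime_iff_prime_int.1 hp.out).irreducible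
  have hnext : IsRubanFraction p (α - rubanFloorQ p α)⁻¹ y z (j + 1) := by
    refine ⟨hz, ?_⟩
    rw [hsub, inv_div]
    push_cast
    rw [pow_succ', mul_assoc]
  refine ⟨z, j + 1, hnext, ?_⟩
  by_contra! hmax
  obtain ⟨hyz, hpj⟩ := eq_neg_and_eq_one_of_mul_mul_eq_sub_mul
    (hp₂.trans (le_self_pow₀ (by lia) k.succ_ne_zero)) (one_le_pow₀ (by lia)) hc₀ hcp hct
    hnext.ne_zero (max_le_iff.1 hmax).1 (max_le_iff.1 hmax).2
  apply hne
  have hz₀ : (z : ℚ) ≠ 0 := mod_cast hnext.ne_zero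
  have hpj' : (p : ℚ) ^ j = 1 := mod_cast hpj
  rw [hnext.eq_div, hyz, pow_succ, hpj', one_mul, Int.cast_neg, neg_div, neg_div,
    div_mul_cancel_right₀ hz₀, one_div]

end IsRubanFraction

theorem exists_rubanCQQ_eq_neg_one_div {α : ℚ} (hnt : ¬ RubanTerminatesQ p α) :
    ∃ N, rubanCQQ p α N = -1 / p := by
  by_contra! hne
  have hstep {n : ℕ} {x y : ℤ} {k : ℕ} (h : IsRubanFraction p (rubanCQQ p α n) x y k) :
      ∃ z j, IsRubanFraction p (rubanCQQ p α (n + 1)) y z j ∧ |z| < max |x| |y| :=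
    h.exists_inv_sub_rubanFloorQ (fun heq => hnt ⟨n, heq⟩) (hne (n + 1))
  have hdescent (M n : ℕ) (x y : ℤ) (k : ℕ) (h : IsRubanFraction p (rubanCQQ p α n) x y k) :
      (M : ℤ) < max |x| |y| := by
    induction M generalizing n x y k with
    | zero => exact lt_max_of_lt_right (abs_pos.2 h.ne_zero)
    | succ M ih =>
      obtain ⟨z, j, hz, hzlt⟩ := hstep h
      obtain ⟨w, i, hw, hwlt⟩ := hstep hz
      have := ih _ _ _ _ hw
      lia
  obtain ⟨x, y, k, h⟩ := exists_isRubanFraction (p := p) α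
  have := hdescent (max |x| |y|).toNat 0 x y k h
  lia

theorem rubanFloorQ_neg_one_div : rubanFloorQ p (-1 / p) = (p : ℚ) - 1 / p := by
  have hp₁ : (1 : ℚ) < p := mod_cast hp.out.one_lt
  have hinv_pos : (0 : ℚ) < 1 / p := by positivity
  have hinv_lt : 1 / (p : ℚ) < 1 := (div_lt_one (by positivity)).2 hp₁
  refine IsRubanFloorQ.rubanFloorQ_eq
    ⟨⟨(p : ℤ) ^ 2 - 1, 1, ?_⟩, by linarith, by linarith, ?_⟩
  · push_cast
    field_simp
  · have hsub : (-1 : ℚ) / p - (p - 1 / p) = -p := by ring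
    rw [hsub, padicNorm.neg]
    exact padicNorm.padicNorm_p_lt_one_of_prime

theorem rubanCQQ_eq_neg_one_div_of_le {α : ℚ} {N : ℕ} (hN : rubanCQQ p α N = -1 / p) {n : ℕ}
    (hn : N ≤ n) : rubanCQQ p α n = -1 / p := by
  induction n, hn using Nat.le_induction with
  | base => exact hN
  | succ n _ ih =>
    have hsub : (-1 : ℚ) / p - (p - 1 / p) = -p := by ring
    rw [rubanCQQ, ih, rubanFloorQ_neg_one_div, hsub, inv_neg, neg_div, one_div]

end RubanExpansion

/-- If the Ruban continued fraction expansion of a rational `α` does not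
terminate, then it is periodic and all partial quotients are eventually `ℓ - 1/ℓ`. -/
theorem ruban_rational_nonterminating_eventually_constant
    (ℓ : ℕ) (hℓ : ℓ.Prime) (α : ℚ) (hnt : ¬ RubanTerminatesQ ℓ α) :
    (∃ N k : ℕ, 1 ≤ k ∧ ∀ n, N ≤ n → rubanCQQ ℓ α (n + k) = rubanCQQ ℓ α n) ∧
      ∃ N : ℕ, ∀ n, N ≤ n → rubanPQQ ℓ α n = (ℓ : ℚ) - 1 / (ℓ : ℚ) := by
  have : Fact ℓ.Prime := ⟨hℓ⟩
  obtain ⟨N, hN⟩ := exists_rubanCQQ_eq_neg_one_div hnt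
  have htail (n : ℕ) (hn : N ≤ n) : rubanCQQ ℓ α n = -1 / ℓ := rubanCQQ_eq_neg_one_div_of_le hN hn
  refine ⟨⟨N, 1, le_rfl, fun n hn => ?_⟩, N, fun n hn => ?_⟩
  · rw [htail n hn, htail (n + 1) (by lia)]
  · rw [rubanPQQ, htail n hn, rubanFloorQ_neg_one_div]
end

section
/- Let (a_n)_{n≥0} be a sequence of real numbers with a_n > 0 for all n ≥ 1, and let p_n, q_n be defined by the continued fraction recurrences. Then the sequence of convergents (p_n/q_n) converges in ℝ if and only if the series ∑_n a_n diverges, and this holds if and only if the sequence (q_n) is unbounded. -/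
open Filter Topology

/-- Continued fraction numerators. -/
def cfNum {R : Type*} [CommRing R] (a : ℕ → R) : ℕ → R
  | 0 => 1
  | 1 => a 0
  | n + 2 => a (n + 1) * cfNum a (n + 1) + cfNum a n

/-- Continued fraction denominators. -/
def cfDen {R : Type*} [CommRing R] (a : ℕ → R) : ℕ → R
  | 0 => 0
  | 1 => 1
  | n + 2 => a (n + 1) * cfDen a (n + 1) + cfDen a n

/-!
Consecutive convergents differ by `± 1 / (qₙ qₙ₊₁)`, so convergence forces `qₙ qₙ₊₁`, and hence
`qₙ`, to be unbounded. As `qₙ + qₙ₊₁ ≤ ∏_{1 ≤ i ≤ n} (1 + aᵢ) ≤ exp (∑_{1 ≤ i ≤ n} aᵢ)`, unbounded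
denominators force `∑ aₙ` to diverge. Finally `qₙ qₙ₊₁ = ∑_{1 ≤ i ≤ n} aᵢ qᵢ²`, where the `qᵢ` are
bounded below by `min 1 a₁`, so divergence of `∑ aₙ` makes `qₙ qₙ₊₁` increase to infinity, and the
convergents are then the partial sums of a convergent alternating series.
-/

section CommRing

variable {R : Type*} [CommRing R] (a : ℕ → R) (n : ℕ)

lemma cfNum_add_two : cfNum a (n + 2) = a (n + 1) * cfNum a (n + 1) + cfNum a n := rfl

lemma cfDen_add_two : cfDen a (n + 2) = a (n + 1) * cfDen a (n + 1) + cfDen a n := rfl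

lemma cfNum_succ_mul_cfDen_sub :
    cfNum a (n + 1) * cfDen a n - cfNum a n * cfDen a (n + 1) = (-1) ^ (n + 1) := by
  induction n with
  | zero => simp [cfNum, cfDen]
  | succ n ih =>
    rw [pow_succ, ← ih, cfNum_add_two, cfDen_add_two]
    ring

lemma cfDen_mul_cfDen_succ_eq_sum :
    cfDen a n * cfDen a (n + 1) = ∑ i ∈ Finset.range n, a (i + 1) * cfDen a (i + 1) ^ 2 := by
  induction n with
  | zero => simp [cfDen]
  | succ n ih =>
    rw [Finset.sum_range_succ, ← ih, cfDen_add_two]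
    ring

end CommRing

section Field

variable {K : Type*} [Field K] {a : ℕ → K}

lemma cfNum_div_cfDen_succ_sub {n : ℕ} (hn : cfDen a n ≠ 0) (hn' : cfDen a (n + 1) ≠ 0) :
    cfNum a (n + 1) / cfDen a (n + 1) - cfNum a n / cfDen a n =
      (-1) ^ (n + 1) * (1 / (cfDen a n * cfDen a (n + 1))) := by
  rw [← cfNum_succ_mul_cfDen_sub]
  field_simp

lemma cfNum_div_cfDen_eq_add_sum (hq : ∀ n, cfDen a (n + 1) ≠ 0) (n : ℕ) :
    cfNum a (n + 1) / cfDen a (n + 1) =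
      a 0 + ∑ i ∈ Finset.range n, (-1) ^ i * (1 / (cfDen a (i + 1) * cfDen a (i + 2))) := by
  induction n with
  | zero => simp [cfNum, cfDen]
  | succ n ih =>
    have hdiff := cfNum_div_cfDen_succ_sub (hq n) (hq (n + 1))
    rw [Finset.sum_range_succ, ← add_assoc, ← ih, ← sub_eq_iff_eq_add', hdiff]
    ring

end Field

section Ordered

variable {R : Type*} [CommRing R] [LinearOrder R] [IsStrictOrderedRing R] {a : ℕ → R}

lemma cfDen_nonneg (ha : ∀ n, 0 ≤ a (n + 1)) : ∀ n, 0 ≤ cfDen a n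
  | 0 => le_rfl
  | 1 => zero_le_one
  | n + 2 => add_nonneg (mul_nonneg (ha n) (cfDen_nonneg ha (n + 1))) (cfDen_nonneg ha n)

lemma cfDen_le_cfDen_add_two (ha : ∀ n, 0 ≤ a (n + 1)) (n : ℕ) : cfDen a n ≤ cfDen a (n + 2) :=
  le_add_of_nonneg_left (mul_nonneg (ha n) (cfDen_nonneg ha (n + 1)))

lemma min_one_le_cfDen_succ (ha : ∀ n, 0 ≤ a (n + 1)) : ∀ n, min 1 (a 1) ≤ cfDen a (n + 1)
  | 0 => min_le_left _ _
  | 1 => by simp [cfDen]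
  | n + 2 => (min_one_le_cfDen_succ ha n).trans (cfDen_le_cfDen_add_two ha (n + 1))

lemma cfDen_succ_pos (ha : ∀ n, 0 ≤ a (n + 1)) (h₁ : 0 < a 1) (n : ℕ) : 0 < cfDen a (n + 1) :=
  (lt_min one_pos h₁).trans_le (min_one_le_cfDen_succ ha n)

lemma monotone_cfDen_mul_cfDen_succ (ha : ∀ n, 0 ≤ a (n + 1)) :
    Monotone fun n ↦ cfDen a n * cfDen a (n + 1) :=
  monotone_nat_of_le_succ fun n ↦ by
    rw [mul_comm]
    exact mul_le_mul_of_nonneg_left (cfDen_le_cfDen_add_two ha n) (cfDen_nonneg ha (n + 1))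

lemma cfDen_add_cfDen_succ_le_prod (ha : ∀ n, 0 ≤ a (n + 1)) (n : ℕ) :
    cfDen a n + cfDen a (n + 1) ≤ ∏ i ∈ Finset.range n, (1 + a (i + 1)) := by
  induction n with
  | zero => simp [cfDen]
  | succ n ih =>
    have hnonneg : 0 ≤ a (n + 1) * cfDen a n := mul_nonneg (ha n) (cfDen_nonneg ha n)
    calc cfDen a (n + 1) + cfDen a (n + 2)
        ≤ (cfDen a n + cfDen a (n + 1)) * (1 + a (n + 1)) := by
          rw [cfDen_add_two]
          linarith
      _ ≤ (∏ i ∈ Finset.range n, (1 + a (i + 1))) * (1 + a (n + 1)) :=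
          mul_le_mul_of_nonneg_right ih (add_nonneg zero_le_one (ha n))
      _ = ∏ i ∈ Finset.range (n + 1), (1 + a (i + 1)) := (Finset.prod_range_succ _ _).symm

lemma sq_min_one_mul_sum_le_cfDen_mul_cfDen_succ (ha : ∀ n, 0 ≤ a (n + 1)) (n : ℕ) :
    min 1 (a 1) ^ 2 * ∑ i ∈ Finset.range n, a (i + 1) ≤ cfDen a n * cfDen a (n + 1) := by
  rw [cfDen_mul_cfDen_succ_eq_sum, Finset.mul_sum]
  refine Finset.sum_le_sum fun i _ ↦ ?_
  rw [mul_comm]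
  have hmin : 0 ≤ min 1 (a 1) := le_min zero_le_one (ha 0)
  exact mul_le_mul_of_nonneg_left (pow_le_pow_left₀ hmin (min_one_le_cfDen_succ ha i) 2) (ha i)

end Ordered

section Real

variable {a : ℕ → ℝ}

lemma bddAbove_range_cfDen_of_summable (ha : ∀ n, 0 ≤ a (n + 1)) (hs : Summable a) :
    BddAbove (Set.range (cfDen a)) := by
  have hs' : Summable fun n ↦ a (n + 1) := (summable_nat_add_iff 1).2 hs
  refine ⟨Real.exp (∑' i, a (i + 1)), Set.forall_mem_range.2 fun n ↦ ?_⟩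
  calc cfDen a n
      ≤ cfDen a n + cfDen a (n + 1) := le_add_of_nonneg_right (cfDen_nonneg ha (n + 1))
    _ ≤ ∏ i ∈ Finset.range n, (1 + a (i + 1)) := cfDen_add_cfDen_succ_le_prod ha n
    _ ≤ Real.exp (∑ i ∈ Finset.range n, a (i + 1)) := Real.prod_one_add_le_exp_sum _ ha
    _ ≤ Real.exp (∑' i, a (i + 1)) := Real.exp_le_exp.2 (hs'.sum_le_tsum _ fun i _ ↦ ha i)

lemma tendsto_cfDen_mul_cfDen_succ_atTop (ha : ∀ n, 0 ≤ a (n + 1)) (h₁ : 0 < a 1)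
    (hs : ¬ Summable a) : Tendsto (fun n ↦ cfDen a n * cfDen a (n + 1)) atTop atTop := by
  have hsum : Tendsto (fun n ↦ ∑ i ∈ Finset.range n, a (i + 1)) atTop atTop :=
    (not_summable_iff_tendsto_nat_atTop_of_nonneg ha).1 (mt (summable_nat_add_iff 1).1 hs)
  have hmin : 0 < min 1 (a 1) := lt_min one_pos h₁
  exact tendsto_atTop_mono (sq_min_one_mul_sum_le_cfDen_mul_cfDen_succ ha)
    (hsum.const_mul_atTop (pow_pos hmin 2))

lemma exists_tendsto_cfNum_div_cfDen (hq : ∀ n, 0 < cfDen a (n + 1))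
    (hmono : Monotone fun n ↦ cfDen a n * cfDen a (n + 1))
    (htop : Tendsto (fun n ↦ cfDen a n * cfDen a (n + 1)) atTop atTop) :
    ∃ L : ℝ, Tendsto (fun n ↦ cfNum a n / cfDen a n) atTop (𝓝 L) := by
  have hanti : Antitone fun n ↦ 1 / (cfDen a (n + 1) * cfDen a (n + 2)) := fun m n hmn ↦
    one_div_le_one_div_of_le (mul_pos (hq m) (hq (m + 1))) (hmono (Nat.succ_le_succ hmn))
  have hzero : Tendsto (fun n ↦ 1 / (cfDen a (n + 1) * cfDen a (n + 2))) atTop (𝓝 0) :=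
    ((tendsto_add_atTop_iff_nat 1).2 htop).const_div_atTop 1
  obtain ⟨l, hl⟩ := hanti.tendsto_alternating_series_of_tendsto_zero hzero
  refine ⟨a 0 + l, (tendsto_add_atTop_iff_nat 1).1 ((hl.const_add (a 0)).congr fun n ↦ ?_)⟩
  exact (cfNum_div_cfDen_eq_add_sum (fun n ↦ (hq n).ne') n).symm

lemma not_bddAbove_range_cfDen_of_tendsto (hq : ∀ n, 0 < cfDen a (n + 1)) {L : ℝ}
    (hL : Tendsto (fun n ↦ cfNum a n / cfDen a n) atTop (𝓝 L)) :
    ¬ BddAbove (Set.range (cfDen a)) := by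
  rintro ⟨B, hB⟩
  have hB' (n : ℕ) : cfDen a n ≤ B := hB (Set.mem_range_self n)
  have hBpos : 0 < B := (hq 0).trans_le (hB' 1)
  have hgap : Tendsto (fun n ↦ |cfNum a (n + 2) / cfDen a (n + 2)
      - cfNum a (n + 1) / cfDen a (n + 1)|) atTop (𝓝 0) := by
    simpa using (((tendsto_add_atTop_iff_nat 2).2 hL).sub ((tendsto_add_atTop_iff_nat 1).2 hL)).abs
  have hle : 1 / (B * B) ≤ 0 := ge_of_tendsto' hgap fun n ↦ by
    have hpos : 0 < cfDen a (n + 1) * cfDen a (n + 2) := mul_pos (hq n) (hq (n + 1))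
    rw [cfNum_div_cfDen_succ_sub (hq n).ne' (hq (n + 1)).ne', abs_mul, abs_neg_one_pow, one_mul,
      abs_of_pos (one_div_pos.2 hpos)]
    exact one_div_le_one_div_of_le hpos
      (mul_le_mul (hB' _) (hB' _) (hq (n + 1)).le hBpos.le)
  exact hle.not_gt (by positivity)

end Real

theorem cf_converges_iff_sum_diverges_iff_den_unbounded_general
    (a : ℕ → ℝ) (hnonneg : ∀ n, 1 ≤ n → 0 ≤ a n) (h₁ : 0 < a 1) :
    ((∃ L : ℝ, Tendsto (fun n : ℕ => cfNum a n / cfDen a n) atTop (𝓝 L)) ↔ ¬ Summable a) ∧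
    ((¬ Summable a) ↔ ¬ BddAbove (Set.range (cfDen a))) := by
  have ha (n : ℕ) : 0 ≤ a (n + 1) := hnonneg (n + 1) n.succ_pos
  have hq : ∀ n, 0 < cfDen a (n + 1) := cfDen_succ_pos ha h₁
  have unbounded_of_converges :
      (∃ L : ℝ, Tendsto (fun n : ℕ => cfNum a n / cfDen a n) atTop (𝓝 L)) →
        ¬ BddAbove (Set.range (cfDen a)) :=
    fun ⟨_, hL⟩ ↦ not_bddAbove_range_cfDen_of_tendsto hq hL
  have diverges_of_unbounded : ¬ BddAbove (Set.range (cfDen a)) → ¬ Summable a :=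
    mt (bddAbove_range_cfDen_of_summable ha)
  have converges_of_diverges (hs : ¬ Summable a) :
      ∃ L : ℝ, Tendsto (fun n : ℕ => cfNum a n / cfDen a n) atTop (𝓝 L) :=
    exists_tendsto_cfNum_div_cfDen hq (monotone_cfDen_mul_cfDen_succ ha)
      (tendsto_cfDen_mul_cfDen_succ_atTop ha h₁ hs)
  exact ⟨⟨diverges_of_unbounded ∘ unbounded_of_converges, converges_of_diverges⟩,
    ⟨unbounded_of_converges ∘ converges_of_diverges, diverges_of_unbounded⟩⟩

/-- For a continued fraction with real partial quotients which are positive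
from index `1` on, the convergents converge in `ℝ` iff `∑ aₙ` diverges, iff the `qₙ` are
unbounded. -/
theorem cf_converges_iff_sum_diverges_iff_den_unbounded
    (a : ℕ → ℝ) (hpos : ∀ n, 1 ≤ n → 0 < a n) :
    ((∃ L : ℝ, Tendsto (fun n : ℕ => cfNum a n / cfDen a n) atTop (𝓝 L)) ↔ ¬ Summable a) ∧
    ((¬ Summable a) ↔ ¬ BddAbove (Set.range (cfDen a))) := by
  exact cf_converges_iff_sum_diverges_iff_den_unbounded_general a
    (fun n hn ↦ (hpos n hn).le) (hpos 1 le_rfl)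
end
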